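/- Let φ be a holomorphic self-map of 𝔻 whose iterates φ^n converge to 0 uniformly on the compact subsets of 𝔻 (0 is the Denjoy–Wolff point of φ). Then the following are equivalent for the composition operator C_φ on H^∞(𝔻): (i) C_φ is mean ergodic; (ii) C_φ is uniformly mean ergodic; (iii) ‖φ^n‖_∞ = sup_{z∈𝔻}|φ^n(z)| converges to 0 as n → ∞. -/

import Mathlib

open Metric Set Filter Complex
open scoped Topology Classical

noncomputable section

/-- Membership in the disc algebra `A(𝔻)`: continuous on the closed unit disc and
holomorphic on the open unit disc. -/
def IsDiscAlg (f : ℂ → ℂ) : Prop :=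
  ContinuousOn f (closedBall (0:ℂ) 1) ∧ DifferentiableOn ℂ f (ball (0:ℂ) 1)

/-- Membership in `H^∞(𝔻)`: bounded and holomorphic on the open unit disc. -/
def IsHInf (f : ℂ → ℂ) : Prop :=
  DifferentiableOn ℂ f (ball (0:ℂ) 1) ∧ ∃ M : ℝ, ∀ z ∈ ball (0:ℂ) 1, ‖f z‖ ≤ M

/-- The Cesàro means `(C_φ)_[n] f = (1/n) ∑_{m=1}^n f ∘ φ^m` of the composition
operator `C_φ f = f ∘ φ`. -/
def cesaro (φ f : ℂ → ℂ) (n : ℕ) (z : ℂ) : ℂ :=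
  (n : ℂ)⁻¹ * ∑ m ∈ Finset.Icc 1 n, f (φ^[m] z)

/-- `C_φ` is mean ergodic on `A(𝔻)`: for each `f ∈ A(𝔻)` the Cesàro means converge
in the sup norm on the closed disc. -/
def MeanErgodicDiscAlg (φ : ℂ → ℂ) : Prop :=
  ∀ f : ℂ → ℂ, IsDiscAlg f →
    ∃ g : ℂ → ℂ, TendstoUniformlyOn (cesaro φ f) g atTop (closedBall (0:ℂ) 1)

/-- `C_φ` is uniformly mean ergodic on `A(𝔻)`: the Cesàro means converge in operator
norm, i.e. uniformly over the unit ball of `A(𝔻)`. -/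
def UnifMeanErgodicDiscAlg (φ : ℂ → ℂ) : Prop :=
  ∃ P : (ℂ → ℂ) → ℂ → ℂ, ∀ ε > (0:ℝ), ∃ N : ℕ, ∀ n ≥ N,
    ∀ f : ℂ → ℂ, IsDiscAlg f → (∀ z ∈ closedBall (0:ℂ) 1, ‖f z‖ ≤ 1) →
      ∀ z ∈ closedBall (0:ℂ) 1, ‖cesaro φ f n z - P f z‖ ≤ ε

/-- `C_φ` is mean ergodic on `H^∞(𝔻)`: for each `f ∈ H^∞(𝔻)` the Cesàro means converge
in the sup norm on the open disc. -/
def MeanErgodicHInf (φ : ℂ → ℂ) : Prop :=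
  ∀ f : ℂ → ℂ, IsHInf f →
    ∃ g : ℂ → ℂ, TendstoUniformlyOn (cesaro φ f) g atTop (ball (0:ℂ) 1)

/-- `C_φ` is uniformly mean ergodic on `H^∞(𝔻)`: the Cesàro means converge in operator
norm, i.e. uniformly over the unit ball of `H^∞(𝔻)`. -/
def UnifMeanErgodicHInf (φ : ℂ → ℂ) : Prop :=
  ∃ P : (ℂ → ℂ) → ℂ → ℂ, ∀ ε > (0:ℝ), ∃ N : ℕ, ∀ n ≥ N,
    ∀ f : ℂ → ℂ, IsHInf f → (∀ z ∈ ball (0:ℂ) 1, ‖f z‖ ≤ 1) →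
      ∀ z ∈ ball (0:ℂ) 1, ‖cesaro φ f n z - P f z‖ ≤ ε

/-- `φ` is an automorphism (biholomorphic self-map) of the open unit disc. -/
def IsDiscAutomorphism (φ : ℂ → ℂ) : Prop :=
  DifferentiableOn ℂ φ (ball (0:ℂ) 1) ∧ MapsTo φ (ball (0:ℂ) 1) (ball (0:ℂ) 1) ∧
  ∃ ψ : ℂ → ℂ, DifferentiableOn ℂ ψ (ball (0:ℂ) 1) ∧
    MapsTo ψ (ball (0:ℂ) 1) (ball (0:ℂ) 1) ∧
    (∀ z ∈ ball (0:ℂ) 1, ψ (φ z) = z) ∧ ∀ z ∈ ball (0:ℂ) 1, φ (ψ z) = z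

/-- An elliptic automorphism of the disc: an automorphism with a fixed point in `𝔻`. -/
def IsEllipticAutomorphism (φ : ℂ → ℂ) : Prop :=
  IsDiscAutomorphism φ ∧ ∃ z ∈ ball (0:ℂ) 1, φ z = z

/-- A hyperbolic automorphism of the disc: an automorphism with exactly two fixed
points, both on the unit circle. -/
def IsHyperbolicAutomorphism (φ : ℂ → ℂ) : Prop :=
  IsDiscAutomorphism φ ∧ ∃ p q : ℂ, p ≠ q ∧ ‖p‖ = 1 ∧ ‖q‖ = 1 ∧ φ p = p ∧ φ q = q ∧
    ∀ z ∈ closedBall (0:ℂ) 1, φ z = z → z = p ∨ z = q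

/-- A parabolic automorphism of the disc: an automorphism with exactly one fixed
point, lying on the unit circle. -/
def IsParabolicAutomorphism (φ : ℂ → ℂ) : Prop :=
  IsDiscAutomorphism φ ∧ ∃ p : ℂ, ‖p‖ = 1 ∧ φ p = p ∧
    ∀ z ∈ closedBall (0:ℂ) 1, φ z = z → z = p

/-- A set `J ⊆ ℕ` has density one: `#(J ∩ [0,N]) / N → 1` as `N → ∞`. -/
def HasDensityOne (J : Set ℕ) : Prop :=
  Tendsto (fun N : ℕ => (((Finset.range (N + 1)).filter (fun n => n ∈ J)).card : ℝ) / N)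
    atTop (𝓝 1)

/-- A typical weight on `𝔻`: continuous, strictly positive, bounded, radial,
non-increasing in `|z|`, and tending to `0` as `|z| → 1`. -/
def IsTypicalWeight (v : ℂ → ℝ) : Prop :=
  ContinuousOn v (ball (0:ℂ) 1) ∧ (∀ z ∈ ball (0:ℂ) 1, 0 < v z) ∧
  (∃ M : ℝ, ∀ z ∈ ball (0:ℂ) 1, v z ≤ M) ∧
  (∀ z ∈ ball (0:ℂ) 1, ∀ w ∈ ball (0:ℂ) 1, ‖z‖ = ‖w‖ → v z = v w) ∧
  (∀ z ∈ ball (0:ℂ) 1, ∀ w ∈ ball (0:ℂ) 1, ‖z‖ ≤ ‖w‖ → v w ≤ v z) ∧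
  (∀ ε > (0:ℝ), ∃ r : ℝ, r < 1 ∧ ∀ z ∈ ball (0:ℂ) 1, r ≤ ‖z‖ → v z < ε)

/-- Membership in the weighted space `H_v^∞`. -/
def IsHvInf (v : ℂ → ℝ) (f : ℂ → ℂ) : Prop :=
  DifferentiableOn ℂ f (ball (0:ℂ) 1) ∧ ∃ M : ℝ, ∀ z ∈ ball (0:ℂ) 1, v z * ‖f z‖ ≤ M

/-- Membership in the weighted space `H_v^0`. -/
def IsHv0 (v : ℂ → ℝ) (f : ℂ → ℂ) : Prop :=
  IsHvInf v f ∧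
  ∀ ε > (0:ℝ), ∃ r : ℝ, r < 1 ∧ ∀ z ∈ ball (0:ℂ) 1, r ≤ ‖z‖ → v z * ‖f z‖ < ε

/-- Cesàro means of a sequence dominated by a null sequence. -/
lemma cesaro_bound (φ : ℂ → ℂ) (a : ℕ → ℝ) (ha : Tendsto a atTop (𝓝 0)) (ε : ℝ) (hε : 0 < ε) :
    ∃ N : ℕ, ∀ n ≥ N, ∀ (f : ℂ → ℂ) (c z : ℂ), (∀ m, ‖f (φ^[m] z) - c‖ ≤ a m) →
      ‖cesaro φ f n z - c‖ ≤ ε := by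
  have h1 : Tendsto (fun n : ℕ => (n : ℝ)⁻¹ * ∑ i ∈ Finset.range n, a (i + 1)) atTop (𝓝 0) :=
    ((tendsto_add_atTop_iff_nat 1).2 ha).cesaro
  obtain ⟨N, hN⟩ := eventually_atTop.1 (h1.eventually (gt_mem_nhds hε))
  refine ⟨max N 1, fun n hn f c z h => ?_⟩
  have hn0 : n ≠ 0 := by have := le_of_max_le_right hn; omega
  have hnc : (n : ℂ) ≠ 0 := by exact_mod_cast hn0
  have e1 : ∑ m ∈ Finset.Icc 1 n, f (φ^[m] z) = ∑ i ∈ Finset.range n, f (φ^[i + 1] z) := by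
    rw [Finset.range_eq_Ico, Finset.sum_Ico_add' (fun m => f (φ^[m] z)) 0 n 1]
    rfl
  have e2 : cesaro φ f n z - c = (n : ℂ)⁻¹ * ∑ i ∈ Finset.range n, (f (φ^[i + 1] z) - c) := by
    unfold cesaro
    rw [e1, Finset.sum_sub_distrib, Finset.sum_const, Finset.card_range, nsmul_eq_mul, mul_sub,
      inv_mul_cancel_left₀ hnc]
  rw [e2, norm_mul, norm_inv, Complex.norm_natCast]
  refine le_trans ?_ (hN n (le_of_max_le_left hn)).le
  refine mul_le_mul_of_nonneg_left ?_ (by positivity)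
  exact (norm_sum_le _ _).trans (Finset.sum_le_sum fun i _ => h (i + 1))

/-- Normalised Blaschke factor. -/
def bl (w z : ℂ) : ℂ := (‖w‖ / w) * ((w - z) / (1 - (starRingEnd ℂ) w * z))

lemma bl_den {w z : ℂ} (hw : ‖w‖ < 1) (hz : ‖z‖ < 1) : 1 - ‖z‖ ≤ ‖1 - (starRingEnd ℂ) w * z‖ := by
  have h := norm_sub_norm_le (1 : ℂ) ((starRingEnd ℂ) w * z)
  rw [norm_mul, RCLike.norm_conj, norm_one] at h
  nlinarith [norm_nonneg z, norm_nonneg w]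

lemma bl_den_ne {w z : ℂ} (hw : ‖w‖ < 1) (hz : ‖z‖ < 1) : 1 - (starRingEnd ℂ) w * z ≠ 0 := by
  have := bl_den hw hz
  intro h
  rw [h, norm_zero] at this
  linarith

lemma bl_norm {w z : ℂ} (hw : ‖w‖ < 1) (hz : ‖z‖ < 1) : ‖bl w z‖ ≤ 1 := by
  have hd : 0 < ‖1 - (starRingEnd ℂ) w * z‖ := norm_pos_iff.2 (bl_den_ne hw hz)
  have h1 : ‖w - z‖ ≤ ‖1 - (starRingEnd ℂ) w * z‖ := by
    refine le_of_sq_le_sq ?_ hd.le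
    have e : ‖1 - (starRingEnd ℂ) w * z‖ ^ 2 - ‖w - z‖ ^ 2 = (1 - ‖w‖ ^ 2) * (1 - ‖z‖ ^ 2) := by
      simp only [← Complex.normSq_eq_norm_sq, Complex.normSq_apply]
      simp
      ring
    have : 0 ≤ (1 - ‖w‖ ^ 2) * (1 - ‖z‖ ^ 2) :=
      mul_nonneg (by nlinarith [norm_nonneg w]) (by nlinarith [norm_nonneg z])
    linarith
  unfold bl
  rw [norm_mul, norm_div, norm_div]
  refine mul_le_one₀ ?_ (by positivity) ?_
  · simpa using div_self_le_one _
  · exact (div_le_one hd).2 h1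

lemma bl_sub {w z : ℂ} (h0 : w ≠ 0) (hw : ‖w‖ < 1) (hz : ‖z‖ < 1) :
    ‖bl w z - 1‖ ≤ (1 - ‖w‖) * (2 / (1 - ‖z‖)) := by
  have hd := bl_den_ne hw hz
  have hd' := bl_den hw hz
  have hc : (starRingEnd ℂ) w * w = (‖w‖ : ℂ) ^ 2 := Complex.conj_mul' w
  have e : bl w z - 1 = -((1 - ‖w‖) * ((1 + ‖w‖ / w * z) / (1 - (starRingEnd ℂ) w * z))) := by
    unfold bl
    have hc' : (starRingEnd ℂ) w = (‖w‖ : ℂ) ^ 2 / w := by field_simp; exact hc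
    rw [hc'] at hd ⊢
    have : w - (‖w‖ : ℂ) ^ 2 * z ≠ 0 := by
      intro h
      apply hd
      field_simp
      simpa using h
    field_simp
    ring
  rw [e, norm_neg, norm_mul, norm_div]
  have e1 : ‖(1 - ‖w‖ : ℂ)‖ = 1 - ‖w‖ := by
    rw [← Complex.ofReal_one, ← Complex.ofReal_sub, Complex.norm_real, Real.norm_of_nonneg]
    linarith
  rw [e1]
  have e2 : ‖1 + (‖w‖ : ℂ) / w * z‖ ≤ 2 := by
    refine (norm_add_le _ _).trans ?_
    rw [norm_mul, norm_div, norm_one, Complex.norm_real, norm_norm, div_self (norm_ne_zero_iff.2 h0)]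
    linarith
  have : 0 < 1 - ‖z‖ := by linarith
  have : 0 ≤ 1 - ‖w‖ := by linarith
  gcongr

lemma bl_diff {w : ℂ} (hw : ‖w‖ < 1) : DifferentiableOn ℂ (bl w) (ball (0:ℂ) 1) := by
  intro z hz
  have := bl_den_ne hw (mem_ball_zero_iff.1 hz)
  unfold bl
  have h : DifferentiableAt ℂ (fun z => (‖w‖ / w : ℂ) * ((w - z) / (1 - (starRingEnd ℂ) w * z))) z := by
    fun_prop (disch := assumption)
  exact h.differentiableWithinAt

/-- Existence of (infinite) Blaschke products. -/
lemma exists_blaschke {ι : Type*} (w : ι → ℂ) (h0 : ∀ i, w i ≠ 0) (h1 : ∀ i, ‖w i‖ < 1)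
    (hs : Summable fun i => 1 - ‖w i‖) :
    ∃ B : ℂ → ℂ, IsHInf B ∧ B 0 ≠ 0 ∧ ∀ i, B (w i) = 0 := by
  have hP : HasProdLocallyUniformlyOn (fun i z => 1 + (bl (w i) z - 1))
      (fun z => ∏' i, (1 + (bl (w i) z - 1))) (ball (0:ℂ) 1) := by
    apply hasProdLocallyUniformlyOn_of_forall_compact Metric.isOpen_ball
    intro K hK hcK
    rcases K.eq_empty_or_nonempty with hN | hN
    · simpa [hasProdUniformlyOn_iff_tendstoUniformlyOn, hN] using tendstoUniformlyOn_empty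
    · obtain ⟨q, hq, _, HB⟩ := hcK.exists_sSup_image_eq_and_ge hN
        (show ContinuousOn (fun q : ℂ ↦ ‖q‖) K by fun_prop)
      refine (hs.mul_right (2 / (1 - ‖q‖))).hasProdUniformlyOn_one_add hcK
        (.of_forall fun i x hx => ?_) (fun i => ?_)
      · have hq1 := mem_ball_zero_iff.1 (hK hq)
        refine (bl_sub (h0 i) (h1 i) (mem_ball_zero_iff.1 (hK hx))).trans ?_
        have a1 : 0 < 1 - ‖q‖ := by linarith
        have a2 : 0 ≤ 1 - ‖w i‖ := by linarith [h1 i]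
        have := HB x hx
        gcongr
      · exact ((bl_diff (h1 i)).continuousOn.mono hK).sub continuousOn_const
  have z0 : (0:ℂ) ∈ ball (0:ℂ) 1 := by simp
  refine ⟨_, ⟨hP.differentiableOn (.of_forall fun s => ?_) isOpen_ball, 1, fun z hz => ?_⟩, ?_, ?_⟩
  · have : DifferentiableOn ℂ (fun z => ∏ i ∈ s, (1 + (bl (w i) z - 1))) (ball (0:ℂ) 1) :=
      DifferentiableOn.fun_finsetProd fun i _ => by simpa using bl_diff (h1 i)
    simpa [Finset.prod_fn] using this
  · have := (hP.hasProd hz).norm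
    refine le_of_tendsto this (.of_forall fun s => ?_)
    refine Finset.prod_le_one (fun _ _ => norm_nonneg _) fun i _ => ?_
    simpa using bl_norm (h1 i) (mem_ball_zero_iff.1 hz)
  · refine tprod_one_add_ne_zero_of_summable (fun i => ?_) ?_
    · simp [bl, h0 i]
    · refine hs.congr fun i => ?_
      have : bl (w i) 0 = ‖w i‖ := by simp [bl, h0 i]
      rw [this, ← Complex.ofReal_one, ← Complex.ofReal_sub, Complex.norm_real, Real.norm_of_nonpos]
      · ring
      · linarith [h1 i]
  · intro i
    exact tprod_of_exists_eq_zero ⟨i, by simp [bl]⟩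

lemma phi_zero {φ : ℂ → ℂ} (hφd : DifferentiableOn ℂ φ (ball (0:ℂ) 1))
    (hDW : TendstoLocallyUniformlyOn (fun (n : ℕ) (z : ℂ) => φ^[n] z) (fun _ => (0:ℂ))
      atTop (ball (0:ℂ) 1)) : φ 0 = 0 := by
  have z0 : (0:ℂ) ∈ ball (0:ℂ) 1 := by simp
  have h := hDW.tendsto_at z0
  have hc : ContinuousAt φ 0 := (hφd.differentiableAt (isOpen_ball.mem_nhds z0)).continuousAt
  have h2 : Tendsto (fun n : ℕ => φ (φ^[n] 0)) atTop (𝓝 (φ 0)) := hc.tendsto.comp h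
  have h3 : Tendsto (fun n : ℕ => φ^[n+1] 0) atTop (𝓝 0) := (tendsto_add_atTop_iff_nat 1).2 h
  simp only [Function.iterate_succ_apply'] at h3
  exact tendsto_nhds_unique h2 h3

lemma unif_to_unif {φ : ℂ → ℂ}
    (hφm : MapsTo φ (ball (0:ℂ) 1) (ball (0:ℂ) 1))
    (hu : TendstoUniformlyOn (fun (n : ℕ) (z : ℂ) => φ^[n] z) (fun _ => (0:ℂ)) atTop
        (ball (0:ℂ) 1)) : UnifMeanErgodicHInf φ := by
  have hm : ∀ n, MapsTo φ^[n] (ball (0:ℂ) 1) (ball (0:ℂ) 1) := fun n => hφm.iterate n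
  have hb : ∀ n, BddAbove ((fun z => ‖φ^[n] z‖) '' ball (0:ℂ) 1) := by
    intro n
    refine ⟨1, ?_⟩
    rintro _ ⟨z, hz, rfl⟩
    exact (mem_ball_zero_iff.1 (hm n hz)).le
  have hne : ∀ n, ((fun z => ‖φ^[n] z‖) '' ball (0:ℂ) 1).Nonempty := fun n =>
    ⟨_, 0, by simp, rfl⟩
  set s : ℕ → ℝ := fun n => sSup ((fun z => ‖φ^[n] z‖) '' ball (0:ℂ) 1) with hsdef
  have hsle : ∀ n, ∀ z ∈ ball (0:ℂ) 1, ‖φ^[n] z‖ ≤ s n := fun n z hz =>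
    le_csSup (hb n) ⟨z, hz, rfl⟩
  have hst : Tendsto s atTop (𝓝 0) := by
    rw [Metric.tendstoUniformlyOn_iff] at hu
    rw [Metric.tendsto_atTop]
    intro ε hε
    obtain ⟨N, hN⟩ := eventually_atTop.1 (hu (ε / 2) (by linarith))
    refine ⟨N, fun n hn => ?_⟩
    have h1 : s n ≤ ε / 2 := by
      refine csSup_le (hne n) ?_
      rintro _ ⟨z, hz, rfl⟩
      have := hN n hn z hz
      rw [dist_zero_left] at this
      exact this.le
    have h2 : 0 ≤ s n := (norm_nonneg _).trans (hsle n 0 (by simp))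
    rw [Real.dist_eq, sub_zero, abs_of_nonneg h2]
    linarith
  refine ⟨fun f _ => f 0, fun ε hε => ?_⟩
  obtain ⟨N, hN⟩ := cesaro_bound φ (fun n => 2 * s n) (by simpa using hst.const_mul 2) ε hε
  refine ⟨N, fun n hn f hf hf1 z hz => hN n hn f (f 0) z fun m => ?_⟩
  have := Complex.dist_le_div_mul_dist_of_mapsTo_ball (R₂ := 2) hf.1 (fun x hx => ?_) (hm m hz)
  · rw [dist_eq_norm, dist_zero_right] at this
    have h2 := hsle m z hz
    linarith
  · rw [mem_closedBall, dist_eq_norm]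
    refine (norm_sub_le _ _).trans ?_
    linarith [hf1 x hx, hf1 0 (by simp)]

lemma unif_to_mean {φ : ℂ → ℂ} (h : UnifMeanErgodicHInf φ) : MeanErgodicHInf φ := by
  obtain ⟨P, hP⟩ := h
  intro f hf
  obtain ⟨M, hM⟩ := hf.2
  set K : ℝ := max M 1 with hK
  have hK0 : 0 < K := lt_of_lt_of_le one_pos (le_max_right _ _)
  have hKc : (K : ℂ) ≠ 0 := by exact_mod_cast hK0.ne'
  set g : ℂ → ℂ := fun z => (K : ℂ)⁻¹ * f z with hg
  have hg1 : ∀ z ∈ ball (0:ℂ) 1, ‖g z‖ ≤ 1 := by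
    intro z hz
    rw [hg]
    simp only [norm_mul, norm_inv, Complex.norm_real, Real.norm_of_nonneg hK0.le]
    rw [inv_mul_le_one₀ hK0]
    exact (hM z hz).trans (le_max_left _ _)
  have hgH : IsHInf g := ⟨hf.1.const_mul _, 1, hg1⟩
  refine ⟨fun z => K * P g z, ?_⟩
  rw [Metric.tendstoUniformlyOn_iff]
  intro ε hε
  obtain ⟨N, hN⟩ := hP (ε / (2 * K)) (by positivity)
  filter_upwards [eventually_ge_atTop N] with n hn z hz
  have h1 := hN n hn g hgH hg1 z hz
  have h2 : cesaro φ f n z = K * cesaro φ g n z := by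
    simp only [cesaro, hg, ← Finset.mul_sum]
    field_simp
  rw [dist_comm, dist_eq_norm, h2, ← mul_sub, norm_mul, Complex.norm_real,
    Real.norm_of_nonneg hK0.le]
  calc K * _ ≤ K * (ε / (2 * K)) := by gcongr
    _ = ε / 2 := by field_simp
    _ < ε := by linarith

lemma mean_to_unif {φ : ℂ → ℂ} (hφd : DifferentiableOn ℂ φ (ball (0:ℂ) 1))
    (hφm : MapsTo φ (ball (0:ℂ) 1) (ball (0:ℂ) 1))
    (hDW : TendstoLocallyUniformlyOn (fun (n : ℕ) (z : ℂ) => φ^[n] z) (fun _ => (0:ℂ))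
      atTop (ball (0:ℂ) 1)) (h : MeanErgodicHInf φ) :
    TendstoUniformlyOn (fun (n : ℕ) (z : ℂ) => φ^[n] z) (fun _ => (0:ℂ)) atTop
        (ball (0:ℂ) 1) := by
  have hm : ∀ n, MapsTo φ^[n] (ball (0:ℂ) 1) (ball (0:ℂ) 1) := fun n => hφm.iterate n
  have p0 := phi_zero hφd hDW
  have z0 : (0:ℂ) ∈ ball (0:ℂ) 1 := by simp
  by_contra hnu
  -- all iterates have sup norm one
  have hfar : ∀ n : ℕ, ∀ r : ℝ, r < 1 → ∃ z ∈ ball (0:ℂ) 1, r < ‖φ^[n] z‖ := by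
    intro n r hr
    by_contra! hcon
    apply hnu
    have hsub : closedBall (0:ℂ) r ⊆ ball 0 1 := closedBall_subset_ball hr
    have hK := (tendstoLocallyUniformlyOn_iff_forall_isCompact isOpen_ball).1 hDW _ hsub
      (isCompact_closedBall 0 r)
    rw [Metric.tendstoUniformlyOn_iff] at hK ⊢
    intro ε hε
    obtain ⟨N, hN⟩ := eventually_atTop.1 (hK ε hε)
    filter_upwards [eventually_ge_atTop (N + n)] with m hmm z hz
    have := hN (m - n) (by omega) (φ^[n] z) (by simpa using hcon z hz)
    rwa [← Function.iterate_add_apply, Nat.sub_add_cancel (by omega)] at this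
  have hdec : ∀ z ∈ ball (0:ℂ) 1, ∀ m n : ℕ, m ≤ n → ‖φ^[n] z‖ ≤ ‖φ^[m] z‖ := by
    intro z hz m n hmn
    refine antitone_nat_of_succ_le (f := fun n => ‖φ^[n] z‖) (fun n => ?_) hmn
    simp only [Function.iterate_succ_apply']
    exact Complex.norm_le_norm_of_mapsTo_ball hφd (hφm.mono_right ball_subset_closedBall) p0
      (mem_ball_zero_iff.1 (hm n hz))
  let δ : ℕ → ℝ := fun k => (1 / 2) ^ k / (k + 2)
  have hδ0 : ∀ k, 0 < δ k := fun k => by positivity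
  have hδ1 : ∀ k, δ k < 1 := fun k => by
    have h1 : ((1:ℝ) / 2) ^ k ≤ 1 := pow_le_one₀ (by norm_num) (by norm_num)
    have h2 : (0:ℝ) ≤ k := Nat.cast_nonneg k
    rw [div_lt_one (by linarith)]
    linarith
  choose z hz hzn using fun k => hfar k (1 - δ k) (by linarith [hδ0 k])
  let w : (Σ k : ℕ, Fin k) → ℂ := fun p => φ^[(p.2 : ℕ) + 1] (z p.1)
  have hw : ∀ p, 1 - δ p.1 < ‖w p‖ := fun p =>
    (hzn p.1).trans_le (hdec _ (hz _) _ _ p.2.2)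
  have hsum : Summable fun p => 1 - ‖w p‖ := by
    have hw1 : ∀ p, ‖w p‖ < 1 := fun p => mem_ball_zero_iff.1 (hm _ (hz _))
    refine Summable.of_nonneg_of_le (f := fun p => δ p.1) (fun p => by linarith [hw1 p])
      (fun p => by linarith [hw p]) ?_
    rw [summable_sigma_of_nonneg (fun p => (hδ0 _).le)]
    refine ⟨fun k => (hasSum_fintype _).summable, ?_⟩
    refine Summable.of_nonneg_of_le (fun k => tsum_nonneg fun _ => (hδ0 _).le) (fun k => ?_)
      (summable_geometric_of_lt_one (r := 1 / 2) (by norm_num) (by norm_num))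
    simp only [tsum_fintype, Finset.sum_const, Finset.card_univ, Fintype.card_fin, nsmul_eq_mul]
    have h2 : (0:ℝ) ≤ k := Nat.cast_nonneg k
    have h3 : (0:ℝ) < (1 / 2) ^ k := by positivity
    rw [mul_div_assoc', div_le_iff₀ (by linarith)]
    nlinarith
  obtain ⟨B, hB, hB0, hBw⟩ := exists_blaschke w
    (fun p => norm_pos_iff.1 (by linarith [hw p, hδ1 p.1]))
    (fun p => mem_ball_zero_iff.1 (hm _ (hz _))) hsum
  obtain ⟨g, hg⟩ := h B hB
  have hgB : ∀ x ∈ ball (0:ℂ) 1, g x = B 0 := by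
    intro x hx
    refine tendsto_nhds_unique (hg.tendsto_at hx) ?_
    have hc : ContinuousAt B 0 := (hB.1.differentiableAt (isOpen_ball.mem_nhds z0)).continuousAt
    have h2 : Tendsto (fun n : ℕ => B (φ^[n] x)) atTop (𝓝 (B 0)) :=
      hc.tendsto.comp (hDW.tendsto_at hx)
    have h3 : Tendsto (fun n : ℕ => ‖B (φ^[n] x) - B 0‖) atTop (𝓝 0) :=
      tendsto_iff_norm_sub_tendsto_zero.1 h2
    rw [Metric.tendsto_atTop]
    intro ε hε
    obtain ⟨N, hN⟩ := cesaro_bound φ _ h3 (ε / 2) (by linarith)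
    refine ⟨N, fun n hn => ?_⟩
    rw [dist_eq_norm]
    linarith [hN n hn B (B 0) x fun m => le_rfl]
  rw [Metric.tendstoUniformlyOn_iff] at hg
  obtain ⟨n, hn⟩ := (hg ‖B 0‖ (norm_pos_iff.2 hB0)).exists
  have h1 := hn (z n) (hz n)
  have h2 : cesaro φ B n (z n) = 0 := by
    unfold cesaro
    rw [Finset.sum_eq_zero, mul_zero]
    intro m hmm
    rw [Finset.mem_Icc] at hmm
    have := hBw ⟨n, ⟨m - 1, by omega⟩⟩
    have e : m - 1 + 1 = m := Nat.sub_add_cancel hmm.1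
    change B (φ^[m - 1 + 1] (z n)) = 0 at this
    rwa [e] at this
  rw [hgB _ (hz n), h2, dist_zero_right] at h1
  exact lt_irrefl _ h1

/-- **Interior Denjoy–Wolff point, `H^∞(𝔻)` case.** Let `φ` be a holomorphic self-map of `𝔻`
with Denjoy–Wolff point `0` (i.e. `φ^n → 0` uniformly on compact subsets of `𝔻`). Then the
following are equivalent: (i) `C_φ` is mean ergodic on `H^∞(𝔻)`; (ii) `C_φ` is uniformly
mean ergodic on `H^∞(𝔻)`; (iii) `‖φ^n‖_∞ → 0`, i.e. `φ^n → 0` uniformly on `𝔻`. -/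
theorem stmt_7 (φ : ℂ → ℂ) (hφd : DifferentiableOn ℂ φ (ball (0:ℂ) 1))
    (hφm : MapsTo φ (ball (0:ℂ) 1) (ball (0:ℂ) 1))
    (hDW : TendstoLocallyUniformlyOn (fun (n : ℕ) (z : ℂ) => φ^[n] z) (fun _ => (0:ℂ))
      atTop (ball (0:ℂ) 1)) :
    (MeanErgodicHInf φ ↔
      TendstoUniformlyOn (fun (n : ℕ) (z : ℂ) => φ^[n] z) (fun _ => (0:ℂ)) atTop
        (ball (0:ℂ) 1)) ∧
    (UnifMeanErgodicHInf φ ↔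
      TendstoUniformlyOn (fun (n : ℕ) (z : ℂ) => φ^[n] z) (fun _ => (0:ℂ)) atTop
        (ball (0:ℂ) 1)) := by
  exact ⟨⟨mean_to_unif hφd hφm hDW, fun h => unif_to_mean (unif_to_unif hφm h)⟩,
    ⟨fun h => mean_to_unif hφd hφm hDW (unif_to_mean h), unif_to_unif hφm⟩⟩
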